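/- arXiv:1410.3154 — 2 statements merged into one kernel-verified Lean document; each statement's English description precedes it below -/
import Mathlib

section
/- Let G be a set of t ≥ 3 nonvertical planes in ℝ³ in general position. Then the number of unordered pairs {f, g} of distinct planes of G that form an edge of the upper envelope of G is at most 3t − 6. -/
/-- A nonvertical plane in `ℝ³`, identified with the coefficient triple `(a, b, c)` of the
affine function `f(x,y) = a*x + b*y + c` whose graph it is. -/
abbrev Plane : Type := ℝ × ℝ × ℝ

/-- Evaluation of the affine function with coefficients `f = (a,b,c)` at `p ∈ ℝ²`. -/
def peval (f : Plane) (p : ℝ × ℝ) : ℝ := f.1 * p.1 + f.2.1 * p.2 + f.2.2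

/-- A finite set of nonvertical planes is in general position if any two of them intersect in
a line (equivalently, their linear parts differ), any three of them intersect in exactly one
point, and no four of them have a common point. -/
def PlanesGenPos (G : Finset Plane) : Prop :=
  (∀ f ∈ G, ∀ g ∈ G, f ≠ g → (f.1, f.2.1) ≠ (g.1, g.2.1)) ∧
  (∀ f ∈ G, ∀ g ∈ G, ∀ h ∈ G, f ≠ g → f ≠ h → g ≠ h →
    ∃! p : ℝ × ℝ, peval f p = peval g p ∧ peval g p = peval h p) ∧
  (∀ f ∈ G, ∀ g ∈ G, ∀ h ∈ G, ∀ i ∈ G,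
    f ≠ g → f ≠ h → f ≠ i → g ≠ h → g ≠ i → h ≠ i →
    ¬ ∃ p : ℝ × ℝ, peval f p = peval g p ∧ peval g p = peval h p ∧ peval h p = peval i p)

namespace UpperEnv

variable {ι : Type*}

/-- evaluation of an indexed family of affine functions -/
def ev (a b c : ι → ℝ) (f : ι) (x y : ℝ) : ℝ := a f * x + b f * y + c f

/-- `(x,y)` lies in the cell of `f`. -/
def Cell (a b c : ι → ℝ) (G : Finset ι) (f : ι) (x y : ℝ) : Prop :=
  ∀ h ∈ G, ev a b c h x y ≤ ev a b c f x y

/-- `(x,y)` is a vertex of the cells of `f,g,k`, in order of increasing slope. -/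
def Trip (a b c : ι → ℝ) (G : Finset ι) (f g k : ι) (x y : ℝ) : Prop :=
  f ∈ G ∧ g ∈ G ∧ k ∈ G ∧ b f < b g ∧ b g < b k ∧
    Cell a b c G f x y ∧ Cell a b c G g x y ∧ Cell a b c G k x y

/-- The cell of `g` is born at the vertex. -/
def Birth (a b c : ι → ℝ) (G : Finset ι) (f g k : ι) : Prop :=
  ∃ x y, Trip a b c G f g k x y ∧ ∀ x' y', Cell a b c G g x' y' → x ≤ x'

def Death (a b c : ι → ℝ) (G : Finset ι) (f g k : ι) : Prop :=
  ∃ x y, Trip a b c G f g k x y ∧ ∀ x' y', Cell a b c G g x' y' → x' ≤ x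

def LUnb (a b c : ι → ℝ) (G : Finset ι) (f g : ι) : Prop :=
  f ∈ G ∧ g ∈ G ∧ b f < b g ∧
  ∃ x0, ∀ x < x0, ∃ y, Cell a b c G f x y ∧ Cell a b c G g x y

/-- Edge `e` is charged to slot `s`. -/
def Charge (a b c : ι → ℝ) (G : Finset ι) (e : ι × ι) (s : ι × Fin 3) : Prop :=
  (s = (e.2, 0) ∧ (LUnb a b c G e.1 e.2 ∨ ∃ k, Birth a b c G e.1 e.2 k)) ∨
  (s = (e.1, 1) ∧ ∃ f, Birth a b c G f e.1 e.2) ∨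
  (∃ h, s = (h, 2) ∧ Death a b c G e.1 h e.2)

variable {a b c : ι → ℝ} {G : Finset ι}

lemma cell_eq {f g : ι} {x y : ℝ} (hf : f ∈ G) (hg : g ∈ G)
    (h1 : Cell a b c G f x y) (h2 : Cell a b c G g x y) :
    ev a b c f x y = ev a b c g x y := le_antisymm (h2 f hf) (h1 g hg)

/-- comparing two points with the same abscissa -/
lemma same_y_aux {f g f' : ι} {x y y' : ℝ} (hf : f ∈ G) (hg : g ∈ G) (hf' : f' ∈ G)
    (hb' : b f' < b g)
    (h1 : Cell a b c G f x y) (h2 : Cell a b c G g x y)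
    (h1' : Cell a b c G f' x y') (h2' : Cell a b c G g x y') : y' ≤ y := by
  have e2 := cell_eq hf' hg h1' h2'
  have e3 := h2 f' hf'
  unfold ev at *
  by_contra hlt
  push Not at hlt
  nlinarith [mul_pos (sub_pos.2 hb') (sub_pos.2 hlt)]

lemma same_y {f g f' : ι} {x y y' : ℝ} (hf : f ∈ G) (hg : g ∈ G) (hf' : f' ∈ G)
    (hb : b f < b g) (hb' : b f' < b g)
    (h1 : Cell a b c G f x y) (h2 : Cell a b c G g x y)
    (h1' : Cell a b c G f' x y') (h2' : Cell a b c G g x y') : y = y' :=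
  le_antisymm (same_y_aux hf' hg hf hb h1' h2' h1 h2) (same_y_aux hf hg hf' hb' h1 h2 h1' h2')

def NoFour (a b c : ι → ℝ) (G : Finset ι) : Prop :=
  ∀ f ∈ G, ∀ g ∈ G, ∀ h ∈ G, ∀ i ∈ G,
    f ≠ g → f ≠ h → f ≠ i → g ≠ h → g ≠ i → h ≠ i → ∀ x y,
    ev a b c f x y = ev a b c g x y → ev a b c g x y = ev a b c h x y →
      ev a b c h x y = ev a b c i x y → False

/-- general position: three planes have a unique common point -/
def Three (a b c : ι → ℝ) (G : Finset ι) : Prop :=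
  ∀ f ∈ G, ∀ g ∈ G, ∀ h ∈ G, f ≠ g → f ≠ h → g ≠ h →
    ∃ x y, ∀ x' y', (ev a b c f x' y' = ev a b c g x' y' ∧ ev a b c g x' y' = ev a b c h x' y') ↔
      (x' = x ∧ y' = y)

lemma trip_unique (h4 : NoFour a b c G) {f g k f' k' : ι} {x y y' : ℝ}
    (h : Trip a b c G f g k x y) (h' : Trip a b c G f' g k' x y') : f = f' ∧ k = k' := by
  obtain ⟨hf, hg, hk, b1, b2, cf, cg, ck⟩ := h
  obtain ⟨hf', -, hk', b1', b2', cf', cg', ck'⟩ := h'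
  obtain rfl := same_y hf hg hf' b1 b1' cf cg cf' cg'
  constructor
  · by_contra hne
    refine h4 f hf f' hf' g hg k hk hne ?_ ?_ ?_ ?_ ?_ x y (cell_eq hf hf' cf cf')
      (cell_eq hf' hg cf' cg) (cell_eq hg hk cg ck) <;> rintro rfl <;> linarith
  · by_contra hne
    refine h4 k hk k' hk' g hg f hf hne ?_ ?_ ?_ ?_ ?_ x y (cell_eq hk hk' ck ck')
      (cell_eq hk' hg ck' cg) (cell_eq hg hf cg cf) <;> rintro rfl <;> linarith

lemma birth_unique (h4 : NoFour a b c G) {f g k f' k' : ι}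
    (h : Birth a b c G f g k) (h' : Birth a b c G f' g k') : f = f' ∧ k = k' := by
  obtain ⟨x, y, t, m⟩ := h
  obtain ⟨x', y', t', m'⟩ := h'
  have : x = x' := le_antisymm (m _ _ t'.2.2.2.2.2.2.1) (m' _ _ t.2.2.2.2.2.2.1)
  subst this
  exact trip_unique h4 t t'

lemma death_unique (h4 : NoFour a b c G) {f g k f' k' : ι}
    (h : Death a b c G f g k) (h' : Death a b c G f' g k') : f = f' ∧ k = k' := by
  obtain ⟨x, y, t, m⟩ := h
  obtain ⟨x', y', t', m'⟩ := h'
  have : x = x' := le_antisymm (m' _ _ t.2.2.2.2.2.2.1) (m _ _ t'.2.2.2.2.2.2.1)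
  subst this
  exact trip_unique h4 t t'

lemma lunb_unique (h3 : Three a b c G) {f g f' : ι}
    (h : LUnb a b c G f g) (h' : LUnb a b c G f' g) : f = f' := by
  obtain ⟨hf, hg, b1, x0, m⟩ := h
  obtain ⟨hf', -, b1', x0', m'⟩ := h'
  by_contra hne
  obtain ⟨X, Y, hu⟩ := h3 f hf f' hf' g hg hne (by rintro rfl; linarith) (by rintro rfl; linarith)
  have key : ∀ x < min x0 x0', x = X := by
    intro x hx
    obtain ⟨y, c1, c2⟩ := m x (lt_of_lt_of_le hx (min_le_left _ _))
    obtain ⟨y', c1', c2'⟩ := m' x (lt_of_lt_of_le hx (min_le_right _ _))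
    obtain rfl := same_y hf hg hf' b1 b1' c1 c2 c1' c2'
    exact ((hu x y).1 ⟨cell_eq hf hf' c1 c1', cell_eq hf' hg c1' c2⟩).1
  have k1 := key (min x0 x0' - 1) (by linarith)
  have k2 := key (min x0 x0' - 2) (by linarith)
  linarith

lemma lunb_birth {f g f' k : ι} 
    (h : LUnb a b c G f g) (h' : Birth a b c G f' g k) : False := by
  obtain ⟨hf, hg, b1, x0, m⟩ := h
  obtain ⟨x, y, t, m'⟩ := h'
  obtain ⟨y', -, c2⟩ := m (min x0 x - 1) (by linarith [min_le_left x0 x])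
  linarith [m' _ _ c2, min_le_right x0 x]

lemma charge_unique (h3 : Three a b c G) (h4 : NoFour a b c G) {e e' : ι × ι} {s : ι × Fin 3}
    (h : Charge a b c G e s) (h' : Charge a b c G e' s) : e = e' := by
  obtain ⟨f, g⟩ := e
  obtain ⟨f', g'⟩ := e'
  rcases h with ⟨rfl, h⟩ | ⟨rfl, k, h⟩ | ⟨k, rfl, h⟩ <;>
  rcases h' with ⟨h1, h'⟩ | ⟨h1, k', h'⟩ | ⟨k', h1, h'⟩ <;> simp at h1 <;> subst h1
  · rcases h with h | ⟨k, h⟩ <;> rcases h' with h' | ⟨k', h'⟩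
    · exact Prod.ext (lunb_unique h3 h h') rfl
    · exact (lunb_birth h h').elim
    · exact (lunb_birth h' h).elim
    · exact Prod.ext (birth_unique h4 h h').1 rfl
  · exact Prod.ext rfl (birth_unique h4 h h').2
  · exact Prod.ext (death_unique h4 h h').1 (death_unique h4 h h').2

lemma line_exists {f g : ι} (hb : b f < b g) : ∃ u v : ℝ, ∀ x y,
    ev a b c g x y - ev a b c f x y = (b g - b f) * (y - (u * x + v)) := by
  have hne : b g - b f ≠ 0 := by linarith
  refine ⟨-(a g - a f) / (b g - b f), -(c g - c f) / (b g - b f), fun x y => ?_⟩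
  unfold ev
  field_simp
  ring

lemma phi_exists (f h : ι) (u v : ℝ) : ∃ α β : ℝ, ∀ x,
    ev a b c h x (u * x + v) - ev a b c f x (u * x + v) = α * x + β := by
  refine ⟨a h + b h * u - a f - b f * u, b h * v + c h - b f * v - c f, fun x => ?_⟩
  unfold ev
  ring

lemma ev_y (h : ι) (x y y' : ℝ) : ev a b c h x y = ev a b c h x y' + b h * (y - y') := by
  unfold ev; ring

lemma charge_exists (hinj : ∀ f ∈ G, ∀ g ∈ G, b f = b g → f = g) {f g : ι} (hf : f ∈ G)
    (hg : g ∈ G) (hb : b f < b g) {x1 y1 : ℝ}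
    (c1 : Cell a b c G f x1 y1) (c2 : Cell a b c G g x1 y1) :
    ∃ s, Charge a b c G (f, g) s := by
  obtain ⟨u, v, huv⟩ := line_exists (a := a) (c := c) hb
  have hd : 0 < b g - b f := by linarith
  have heq : ∀ x, ev a b c g x (u * x + v) = ev a b c f x (u * x + v) := fun x => by
    have := huv x (u * x + v)
    rw [sub_self, mul_zero] at this
    linarith
  have hy1 : y1 = u * x1 + v := by
    have := huv x1 y1
    rw [cell_eq hf hg c1 c2, sub_self] at this
    rcases mul_eq_zero.1 this.symm with h | h <;> linarith
  subst hy1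
  choose α β hφ using fun h => phi_exists (a := a) (b := b) (c := c) f h u v
  have hcell : ∀ x, (∀ h ∈ G, α h * x + β h ≤ 0) →
      Cell a b c G f x (u * x + v) ∧ Cell a b c G g x (u * x + v) := by
    intro x hx
    constructor
    · intro h hh
      linarith [hx h hh, hφ h x]
    · intro h hh
      linarith [hx h hh, hφ h x, heq x]
  have hx1 : ∀ h ∈ G, α h * x1 + β h ≤ 0 := fun h hh => by linarith [c1 h hh, hφ h x1]
  classical
  by_cases hne : (G.filter (fun h => α h < 0)).Nonempty
  swap
  · refine ⟨(g, 0), Or.inl ⟨rfl, Or.inl ⟨hf, hg, hb, x1, fun x hx => ⟨_, hcell x ?_⟩⟩⟩⟩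
    intro h hh
    have : 0 ≤ α h := by
      by_contra hlt
      exact hne ⟨h, by simp [hh]; linarith⟩
    nlinarith [hx1 h hh, mul_nonneg this (sub_nonneg.2 hx.le)]
  obtain ⟨h, hh, hmax⟩ := Finset.exists_max_image _ (fun h => - β h / α h) hne
  simp only [Finset.mem_filter] at hh hmax
  obtain ⟨hG, hα⟩ := hh
  set x0 := - β h / α h with hx0
  have hz : α h * x0 + β h = 0 := by rw [hx0, mul_div_cancel₀ _ hα.ne]; ring
  have hle : x0 ≤ x1 := by
    by_contra hlt
    push Not at hlt
    nlinarith [hx1 h hG]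
  have hX : ∀ k ∈ G, α k * x0 + β k ≤ 0 := by
    intro k hk
    by_cases hk0 : α k < 0
    · have := hmax k ⟨hk, hk0⟩
      rw [div_le_iff_of_neg hk0] at this
      linarith
    · push Not at hk0
      nlinarith [hx1 k hk, mul_nonneg hk0 (sub_nonneg.2 hle)]
  obtain ⟨cf, cg⟩ := hcell x0 hX
  have ch : Cell a b c G h x0 (u * x0 + v) := by
    intro k hk
    linarith [cf k hk, hφ h x0]
  have hpos : ∀ x < x0, ev a b c f x (u * x + v) < ev a b c h x (u * x + v) := by
    intro x hx
    nlinarith [hφ h x]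
  have hneg : ∀ x, x0 < x → ev a b c h x (u * x + v) < ev a b c f x (u * x + v) := by
    intro x hx
    nlinarith [hφ h x]
  have hnf : h ≠ f := by rintro rfl; linarith [hpos (x0 - 1) (by linarith)]
  have hng : h ≠ g := by rintro rfl; linarith [hpos (x0 - 1) (by linarith), heq (x0 - 1)]
  have bf : b h ≠ b f := fun e => hnf (hinj h hG f hf e)
  have bg : b h ≠ b g := fun e => hng (hinj h hG g hg e)
  rcases lt_or_gt_of_ne bf with l1 | l1
  · -- h < f < g
    refine ⟨(f, 1), Or.inr (Or.inl ⟨rfl, h, x0, u * x0 + v, ⟨hG, hf, hg, l1, hb, ch, cf, cg⟩, ?_⟩)⟩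
    intro x y hc
    by_contra hlt
    push Not at hlt
    have p := hpos x hlt
    have q1 := hc h hG
    have q2 := hc g hg
    have q3 := huv x y
    have := ev_y (a := a) (b := b) (c := c) h x y (u * x + v)
    have := ev_y (a := a) (b := b) (c := c) f x y (u * x + v)
    have q4 : y - (u * x + v) ≤ 0 := by
      by_contra hp
      push Not at hp
      nlinarith [mul_pos hd hp]
    nlinarith
  rcases lt_or_gt_of_ne bg with l2 | l2
  · -- f < h < g
    refine ⟨(h, 2), Or.inr (Or.inr ⟨h, rfl, x0, u * x0 + v, ⟨hf, hG, hg, l1, l2, cf, ch, cg⟩, ?_⟩)⟩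
    intro x y hc
    by_contra hlt
    push Not at hlt
    have p := hneg x hlt
    have q1 := hc f hf
    have q2 := hc g hg
    have e0 := heq x
    have := ev_y (a := a) (b := b) (c := c) h x y (u * x + v)
    have := ev_y (a := a) (b := b) (c := c) f x y (u * x + v)
    have := ev_y (a := a) (b := b) (c := c) g x y (u * x + v)
    rcases le_total 0 (y - (u * x + v)) with hs | hs
    · nlinarith
    · nlinarith
  · refine ⟨(g, 0), Or.inl ⟨rfl, Or.inr ⟨h, x0, u * x0 + v, ⟨hf, hg, hG, hb, l2, cf, cg, ch⟩, ?_⟩⟩⟩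
    intro x y hc
    by_contra hlt
    push Not at hlt
    have p := hpos x hlt
    have q1 := hc h hG
    have q2 := hc f hf
    have q3 := huv x y
    have e0 := heq x
    have := ev_y (a := a) (b := b) (c := c) h x y (u * x + v)
    have := ev_y (a := a) (b := b) (c := c) g x y (u * x + v)
    have q4 : 0 ≤ y - (u * x + v) := by
      by_contra hp
      push Not at hp
      nlinarith [mul_pos hd (neg_pos.2 hp)]
    nlinarith

/-- some middle plane has a cell that is unbounded to the left or to the right -/
lemma unbounded_middle (h3 : Three a b c G) {f g h : ι} (hf : f ∈ G) (hg : g ∈ G) (hh : h ∈ G)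
    (hb : b f < b g) (hhf : h ≠ f) (hhg : h ≠ g)
    (hall : ∀ m ∈ G, m ≠ f → m ≠ g →
      (∃ x0, ∀ x y, Cell a b c G m x y → x0 ≤ x) ∧ (∃ x0, ∀ x y, Cell a b c G m x y → x ≤ x0)) :
    False := by
  classical
  obtain ⟨u, v, huv⟩ := line_exists (a := a) (c := c) hb
  have heq : ∀ x, ev a b c g x (u * x + v) = ev a b c f x (u * x + v) := fun x => by
    have := huv x (u * x + v)
    rw [sub_self, mul_zero] at this
    linarith
  obtain ⟨α, β, hφ⟩ := phi_exists (a := a) (b := b) (c := c) f h u v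
  -- at any point where no middle cell is present, `h` lies below
  have hbelow : ∀ x, (∀ m ∈ G, m ≠ f → m ≠ g → ¬ Cell a b c G m x (u * x + v)) →
      α * x + β ≤ 0 := by
    intro x hx
    obtain ⟨m, hm, hmax⟩ := Finset.exists_max_image G (fun m => ev a b c m x (u * x + v)) ⟨f, hf⟩
    have : ev a b c m x (u * x + v) = ev a b c f x (u * x + v) := by
      by_cases h1 : m = f
      · rw [h1]
      by_cases h2 : m = g
      · rw [h2, heq]
      exact (hx m hm h1 h2 hmax).elim
    linarith [hmax h hh, hφ x]
  have hA : ∃ A : ℝ, ∀ m ∈ G, m ≠ f → m ≠ g → ∀ x y, Cell a b c G m x y → A ≤ x ∧ x ≤ -A := by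
    have : ∀ m, ∃ A : ℝ, m ∈ G → m ≠ f → m ≠ g → ∀ x y, Cell a b c G m x y → A ≤ x ∧ x ≤ -A := by
      intro m
      by_cases hm : m ∈ G ∧ m ≠ f ∧ m ≠ g
      · obtain ⟨⟨p, hp⟩, q, hq⟩ := hall m hm.1 hm.2.1 hm.2.2
        refine ⟨min p (-q), fun _ _ _ x y hc => ⟨?_, ?_⟩⟩
        · exact (min_le_left _ _).trans (hp x y hc)
        · linarith [hq x y hc, min_le_right p (-q)]
      · exact ⟨0, fun h1 h2 h3 => (hm ⟨h1, h2, h3⟩).elim⟩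
    choose A hA using this
    obtain ⟨m0, -, hm0⟩ := Finset.exists_min_image G A ⟨f, hf⟩
    exact ⟨A m0, fun m hm h1 h2 x y hc => 
      ⟨(hm0 m hm).trans (hA m hm h1 h2 x y hc).1, by
        linarith [hm0 m hm, (hA m hm h1 h2 x y hc).2]⟩⟩
  obtain ⟨A, hA⟩ := hA
  have hL : ∀ x < A, α * x + β ≤ 0 := fun x hx => hbelow x fun m hm h1 h2 hc => by
    linarith [(hA m hm h1 h2 _ _ hc).1]
  have hR : ∀ x, -A < x → α * x + β ≤ 0 := fun x hx => hbelow x fun m hm h1 h2 hc => by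
    linarith [(hA m hm h1 h2 _ _ hc).2]
  obtain ⟨X, Y, hu⟩ := h3 f hf g hg h hh (by rintro rfl; linarith) hhf.symm hhg.symm
  obtain ⟨e1, e2⟩ := (hu X Y).2 ⟨rfl, rfl⟩
  have hY : Y = u * X + v := by
    have := huv X Y
    rw [e1, sub_self] at this
    rcases mul_eq_zero.1 this.symm with h | h <;> linarith
  have hz : α * X + β = 0 := by rw [← hφ, ← hY]; linarith
  have hα : α = 0 := by
    have r1 : α * (X - (|X| + |A| + 1)) + β ≤ 0 := hL _ (by
      have := le_abs_self X; have := neg_abs_le A; linarith)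
    have r2 : α * (X + (|X| + |A| + 1)) + β ≤ 0 := hR _ (by
      have := neg_abs_le X; have := neg_abs_le A; linarith)
    have hp : 0 < |X| + |A| + 1 := by positivity
    have s1 : α * (|X| + |A| + 1) = 0 := by nlinarith
    rcases mul_eq_zero.1 s1 with h | h
    · exact h
    · linarith
  have hβ : β = 0 := by rw [hα] at hz; linarith
  have := ((hu (X + 1) (u * (X + 1) + v)).1 ⟨(heq _).symm, by
    have := hφ (X + 1); rw [hα, hβ] at this; linarith [heq (X + 1)]⟩).1
  linarith

open Classical in
lemma main_bound (hinj : ∀ f ∈ G, ∀ g ∈ G, b f = b g → f = g) (h3 : Three a b c G)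
    (h4 : NoFour a b c G) (hc : 3 ≤ G.card) :
    ((G ×ˢ G).filter (fun e => b e.1 < b e.2 ∧
      ∃ x y, Cell a b c G e.1 x y ∧ Cell a b c G e.2 x y)).card ≤ 3 * G.card - 6 := by
  have hGne : G.Nonempty := Finset.card_pos.1 (by omega)
  obtain ⟨f, hf, hfmin⟩ := Finset.exists_min_image G b hGne
  obtain ⟨g, hg, hgmax⟩ := Finset.exists_max_image G b hGne
  have hex : ∃ h ∈ G, h ≠ f ∧ h ≠ g := by
    by_contra hno
    push Not at hno
    have : G ⊆ {f, g} := fun m hm => by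
      by_cases h : m = f
      · simp [h]
      · simp [hno m hm h]
    have := (Finset.card_le_card this).trans Finset.card_le_two
    omega
  obtain ⟨h, hh, hhf, hhg⟩ := hex
  have hb : b f < b g := by
    rcases (hfmin g hg).lt_or_eq with h1 | h1
    · exact h1
    · exact (hhf (hinj h hh f hf (by linarith [hfmin h hh, hgmax h hh]))).elim
  -- the extra slot
  have hextra : ∃ m ∈ G, m ≠ f ∧ m ≠ g ∧ ∃ i : Fin 3, i ≠ 0 ∧ ∀ e, ¬ Charge a b c G e (m, i) := by
    by_contra hno
    push Not at hno
    refine unbounded_middle h3 hf hg hh hb hhf hhg fun m hm m1 m2 => ⟨?_, ?_⟩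
    · obtain ⟨e, he⟩ := hno m hm m1 m2 1 (by decide)
      rcases he with ⟨h1, -⟩ | ⟨h1, k, x, y, -, h2⟩ | ⟨k, h1, -⟩ <;> simp at h1
      subst h1
      exact ⟨x, h2⟩
    · obtain ⟨e, he⟩ := hno m hm m1 m2 2 (by decide)
      rcases he with ⟨h1, -⟩ | ⟨h1, -⟩ | ⟨k, h1, x, y, -, h2⟩ <;> simp at h1
      subst h1
      exact ⟨x, h2⟩
  obtain ⟨m, hm, hmf, hmg, i, hi, hmi⟩ := hextra
  have hfg : f ≠ g := by rintro rfl; linarith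
  set S : Finset (ι × Fin 3) := (G ×ˢ Finset.univ).filter (fun s => ∃ e, Charge a b c G e s)
  set U : Finset (ι × Fin 3) := {(f, 0), (f, 1), (f, 2), (g, 1), (g, 2), (m, i)}
  have hU : U.card = 6 := by
    simp [U, Finset.card_insert_of_notMem, hfg, hmf.symm, hmg.symm]
  have hUG : U ⊆ G ×ˢ Finset.univ := by
    intro s hs
    simp only [U, Finset.mem_insert, Finset.mem_singleton] at hs
    rcases hs with rfl | rfl | rfl | rfl | rfl | rfl <;> simp [hf, hg, hm]
  have nobirthf : ∀ p k, ¬ Birth a b c G p f k := by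
    rintro p k ⟨x, y, ⟨hp, -, -, hlt, -⟩, -⟩
    linarith [hfmin p hp]
  have hSU : S ⊆ (G ×ˢ Finset.univ) \ U := by
    intro s hs
    simp only [S, Finset.mem_filter] at hs
    obtain ⟨hs1, e, he⟩ := hs
    refine Finset.mem_sdiff.2 ⟨hs1, fun hsU => ?_⟩
    simp only [U, Finset.mem_insert, Finset.mem_singleton] at hsU
    rcases hsU with rfl | rfl | rfl | rfl | rfl | rfl
    · rcases he with ⟨h1, h2⟩ | ⟨h1, -⟩ | ⟨k, h1, -⟩ <;> simp at h1
      rw [← h1] at h2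
      rcases h2 with ⟨h2, -, h3, -⟩ | ⟨k, h2⟩
      · linarith [hfmin _ h2]
      · exact nobirthf _ _ h2
    · rcases he with ⟨h1, h2⟩ | ⟨h1, k, h2⟩ | ⟨k, h1, -⟩ <;> simp at h1
      rw [← h1] at h2
      exact nobirthf _ _ h2
    · rcases he with ⟨h1, h2⟩ | ⟨h1, k, h2⟩ | ⟨k, h1, x, y, ⟨hp, -, -, hlt, -⟩, -⟩ <;> simp at h1
      rw [← h1] at hlt
      linarith [hfmin _ hp]
    · rcases he with ⟨h1, h2⟩ | ⟨h1, k, x, y, ⟨-, -, hp, -, hlt, -⟩, -⟩ | ⟨k, h1, -⟩ <;> simp at h1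
      rw [← h1] at hlt
      linarith [hgmax _ hp]
    · rcases he with ⟨h1, h2⟩ | ⟨h1, k, h2⟩ | ⟨k, h1, x, y, ⟨-, -, hp, -, hlt, -⟩, -⟩ <;> simp at h1
      rw [← h1] at hlt
      linarith [hgmax _ hp]
    · exact hmi e he
  have hScard : S.card ≤ 3 * G.card - 6 := by
    refine (Finset.card_le_card hSU).trans ?_
    rw [Finset.card_sdiff_of_subset hUG, hU, Finset.card_product]
    simp [mul_comm]
  refine le_trans ?_ hScard
  refine Finset.card_le_card_of_forall_subsingleton (Charge a b c G) ?_ ?_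
  · rintro ⟨p, q⟩ he
    simp only [Finset.mem_filter, Finset.mem_product] at he
    obtain ⟨⟨hp, hq⟩, hlt, x, y, c1, c2⟩ := he
    obtain ⟨s, hs⟩ := charge_exists hinj hp hq hlt c1 c2
    refine ⟨s, ?_, hs⟩
    simp only [S, Finset.mem_filter, Finset.mem_product, Finset.mem_univ, and_true]
    refine ⟨?_, _, hs⟩
    rcases hs with ⟨rfl, -⟩ | ⟨rfl, -⟩ | ⟨k, rfl, x, y, ⟨-, hk, -⟩, -⟩
    · exact hq
    · exact hp
    · exact hk
  · intro s hs e he e' he'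
    exact charge_unique h3 h4 he.2 he'.2

lemma shear_exists (G : Finset Plane)
    (h : ∀ f ∈ G, ∀ g ∈ G, f ≠ g → (f.1, f.2.1) ≠ (g.1, g.2.1)) :
    ∃ s : ℝ, ∀ f ∈ G, ∀ g ∈ G, f.2.1 + s * f.1 = g.2.1 + s * g.1 → f = g := by
  classical
  obtain ⟨s, hs⟩ := Infinite.exists_notMem_finset
    ((G ×ˢ G).image fun e => -(e.1.2.1 - e.2.2.1) / (e.1.1 - e.2.1))
  refine ⟨s, fun f hf g hg heq => ?_⟩
  by_contra hne
  by_cases h1 : f.1 = g.1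
  · refine h f hf g hg hne ?_
    rw [h1] at heq
    rw [h1, add_right_cancel heq]
  · apply hs
    refine Finset.mem_image.2 ⟨(f, g), by simp [hf, hg], ?_⟩
    have : f.1 - g.1 ≠ 0 := sub_ne_zero.2 h1
    simp only
    rw [div_eq_iff this]
    linarith

end UpperEnv

open UpperEnv in
/-- The number of (unordered) pairs of distinct planes of a set `G` of `t ≥ 3` planes in
general position that form an edge of the upper envelope of `G` is at most `3t - 6`. -/
theorem upper_envelope_edge_count (G : Finset Plane) (ht : 3 ≤ G.card)
    (hgen : PlanesGenPos G) :
    {e : Sym2 Plane | ∃ f ∈ G, ∃ g ∈ G, f ≠ g ∧ e = s(f, g) ∧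
        ∃ p : ℝ × ℝ, peval f p = peval g p ∧ ∀ h ∈ G, peval h p ≤ peval f p}.ncard
      ≤ 3 * G.card - 6 := by
  classical
  obtain ⟨g1, g2, g3⟩ := hgen
  obtain ⟨s, hs⟩ := shear_exists G g1
  set a : Plane → ℝ := fun f => f.1 with ha
  set b : Plane → ℝ := fun f => f.2.1 + s * f.1 with hb
  set c : Plane → ℝ := fun f => f.2.2 with hc
  have hev : ∀ f x y, ev a b c f x y = peval f (x + s * y, y) := by
    intro f x y
    simp only [ev, peval, ha, hb, hc]
    ring
  have hev' : ∀ f (p : ℝ × ℝ), peval f p = ev a b c f (p.1 - s * p.2) p.2 := by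
    intro f p
    simp only [ev, peval, ha, hb, hc]
    ring
  have h3 : Three a b c G := by
    intro f hf g hg h hh n1 n2 n3
    obtain ⟨p, hp, hu⟩ := g2 f hf g hg h hh n1 n2 n3
    refine ⟨p.1 - s * p.2, p.2, fun x y => ⟨fun hxy => ?_, ?_⟩⟩
    · have := hu (x + s * y, y) (by simpa only [hev] using hxy)
      rw [← this]
      simp
    · rintro ⟨rfl, rfl⟩
      simpa only [hev'] using hp
  have h4 : NoFour a b c G := by
    intro f hf g hg h hh i hi n1 n2 n3 n4 n5 n6 x y e1 e2 e3
    simp only [hev] at e1 e2 e3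
    exact g3 f hf g hg h hh i hi n1 n2 n3 n4 n5 n6 ⟨_, e1, e2, e3⟩
  refine le_trans ?_ (main_bound hs h3 h4 ht)
  rw [← Set.ncard_coe_finset]
  refine le_trans (Set.ncard_le_ncard ?_ (Set.toFinite _)) (Set.ncard_image_le
    (f := fun e : Plane × Plane => s(e.1, e.2)) (Finset.finite_toSet _))
  rintro e ⟨f, hf, g, hg, hne, rfl, p, hp, hmax⟩
  have cf : Cell a b c G f (p.1 - s * p.2) p.2 := by
    intro h hh
    rw [← hev', ← hev']
    exact hmax h hh
  have cg : Cell a b c G g (p.1 - s * p.2) p.2 := by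
    intro h hh
    rw [← hev', ← hev', ← hp]
    exact hmax h hh
  have hbne : b f ≠ b g := fun e => hne (hs f hf g hg e)
  rcases lt_or_gt_of_ne hbne with hlt | hlt
  · refine ⟨(f, g), ?_, rfl⟩
    simp only [Finset.coe_filter, Finset.mem_product, Set.mem_setOf_eq]
    exact ⟨⟨hf, hg⟩, hlt, _, _, cf, cg⟩
  · refine ⟨(g, f), ?_, Sym2.eq_swap⟩
    simp only [Finset.coe_filter, Finset.mem_product, Set.mem_setOf_eq]
    exact ⟨⟨hg, hf⟩, hlt, _, _, cg, cf⟩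
end

section
/- There exists a constant C > 0 with the following property. Let H be a set of n ≥ 3 nonvertical planes in ℝ³ in general position, let k ≥ 1 be a real number, and let Q be a finite set of points in ℝ³, none lying on any plane of H, such that every point of Q has level (with respect to H) between k and 2k, and d_H(u, v) ≥ (3/2)k for every two distinct points u, v ∈ Q. Then |Q| ≤ C·n/k. -/
/-- A point in `ℝ³`. -/
abbrev Pt : Type := ℝ × ℝ × ℝ

open Classical in
/-- The level of a point `u` with respect to a finite set `H` of nonvertical planes: the
number of planes of `H` lying strictly below `u`. -/
noncomputable def level (H : Finset Plane) (u : Pt) : ℕ :=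
  (H.filter (fun f => peval f (u.1, u.2.1) < u.2.2)).card

open Classical in
/-- The crossing distance between points `u, v ∈ ℝ³` with respect to a finite set `H` of
nonvertical planes: the number of planes of `H` strictly separating `u` from `v`. -/
noncomputable def cdist (H : Finset Plane) (u v : Pt) : ℕ :=
  (H.filter (fun f =>
    (u.2.2 - peval f (u.1, u.2.1)) * (v.2.2 - peval f (v.1, v.2.1)) < 0)).card


/-- Signed height of the point `w` above the plane `g`. -/
noncomputable def hgt (g : Plane) (w : Pt) : ℝ := w.2.2 - peval g (w.1, w.2.1)

/-- Oriented area of the triangle of gradients. -/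
noncomputable def gdet (f g h : Plane) : ℝ :=
  (g.1 - f.1) * (h.2.1 - f.2.1) - (g.2.1 - f.2.1) * (h.1 - f.1)

/-- `g` is crossed when moving from `w` to `w'` (we end strictly on a side of `g`, and we did
not start strictly on that side). -/
def Crossed (g : Plane) (w w' : Pt) : Prop := hgt g w' ≠ 0 ∧ ¬ (0 < hgt g w * hgt g w')

lemma gp_det {H : Finset Plane} (hH : PlanesGenPos H) {f g h : Plane} (hf : f ∈ H) (hg : g ∈ H)
    (hh : h ∈ H) (hfg : f ≠ g) (hfh : f ≠ h) (hgh : g ≠ h) : gdet f g h ≠ 0 := by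
  intro hD
  unfold gdet at hD
  obtain ⟨h1, h2, -⟩ := hH
  obtain ⟨p, ⟨e1, e2⟩, hu⟩ := h2 f hf g hg h hh hfg hfh hgh
  have := hu (p.1 - (g.2.1 - f.2.1), p.2 + (g.1 - f.1)) (by
    unfold peval at *
    constructor
    · simp only; linear_combination e1
    · simp only; linear_combination e2 - hD)
  have ha := congrArg Prod.fst this
  have hb := congrArg Prod.snd this
  simp only at ha hb
  apply h1 f hf g hg hfg
  ext
  · simp only; linarith
  · simp only; linarith

lemma vertex_unique {f g h : Plane} (hD : gdet f g h ≠ 0) {w w' : Pt}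
    (h1 : hgt f w = 0) (h2 : hgt g w = 0) (h3 : hgt h w = 0)
    (h1' : hgt f w' = 0) (h2' : hgt g w' = 0) (h3' : hgt h w' = 0) : w = w' := by
  unfold hgt peval at *
  unfold gdet at hD
  obtain ⟨x, y, z⟩ := w
  obtain ⟨x', y', z'⟩ := w'
  simp only at *
  have hx : x = x' := by
    apply mul_left_cancel₀ hD
    linear_combination (h.2.1 - f.2.1) * (h1 - h2 - h1' + h2') - (g.2.1 - f.2.1) * (h1 - h3 - h1' + h3')
  have hy : y = y' := by
    apply mul_left_cancel₀ hD
    linear_combination (g.1 - f.1) * (h1 - h3 - h1' + h3') - (h.1 - f.1) * (h1 - h2 - h1' + h2')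
  subst hx hy
  have hz : z = z' := by linarith
  rw [hz]

lemma exists_smallest {α : Type*} [DecidableEq α] (F : Finset α) (v : α → ℝ) (m : ℕ)
    (hm : m ≤ F.card) :
    ∃ T ⊆ F, T.card = m ∧ ∀ f ∈ T, ∀ g ∈ F, v g < v f → g ∈ T := by
  induction m with
  | zero => exact ⟨∅, by simp, by simp, by simp⟩
  | succ m ih =>
    obtain ⟨T, hT, hc, hs⟩ := ih (by omega)
    have hne : (F \ T).Nonempty := by
      rw [← Finset.card_pos, Finset.card_sdiff_of_subset hT]; omega
    obtain ⟨x, hx, hmin⟩ := Finset.exists_min_image (F \ T) v hne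
    rw [Finset.mem_sdiff] at hx
    refine ⟨insert x T, ?_, ?_, ?_⟩
    · intro y hy
      rcases Finset.mem_insert.1 hy with rfl | hy
      · exact hx.1
      · exact hT hy
    · rw [Finset.card_insert_of_notMem hx.2, hc]
    · intro f hf g hg hgf
      rcases Finset.mem_insert.1 hf with rfl | hf
      · by_contra hcon
        have hgT : g ∉ T := fun h => hcon (Finset.mem_insert_of_mem h)
        have := hmin g (Finset.mem_sdiff.2 ⟨hg, hgT⟩)
        linarith
      · exact Finset.mem_insert_of_mem (hs f hf g hg hgf)

/-- Rate of change of `hgt g` in direction `d`. -/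
noncomputable def slp (g : Plane) (d : Pt) : ℝ := d.2.2 - g.1 * d.1 - g.2.1 * d.2.1

open Classical in
lemma line_step (H F : Finset Plane) (w d : Pt) (m : ℕ) (hF : F ⊆ H) (hm : m ≤ F.card)
    (hpar : ∀ g ∈ F, slp g d ≠ 0) (hcon : ∀ g ∈ H, g ∉ F → slp g d = 0) :
    ∃ T ⊆ F, T.card = m ∧ ∀ f ∈ T, ∃ w' : Pt, hgt f w' = 0 ∧
      (∀ g ∈ H, g ∉ F → hgt g w' = hgt g w) ∧
      (H.filter (fun g => Crossed g w w')).card + 1 ≤ m := by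
  obtain ⟨T, hT, hc, hs⟩ := exists_smallest F (fun g => |hgt g w / slp g d|) m hm
  refine ⟨T, hT, hc, fun f hf => ?_⟩
  set t : ℝ := - (hgt f w / slp f d) with ht
  have hw : ∀ g, hgt g (w.1 + t * d.1, w.2.1 + t * d.2.1, w.2.2 + t * d.2.2)
      = hgt g w + t * slp g d := by
    intro g; unfold hgt slp peval; simp only; ring
  refine ⟨(w.1 + t * d.1, w.2.1 + t * d.2.1, w.2.2 + t * d.2.2), ?_, ?_, ?_⟩
  · rw [hw, ht]
    have := hpar f (hT hf)
    field_simp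
    ring
  · intro g hg hgF
    rw [hw, hcon g hg hgF]; ring
  · have hsub : H.filter (fun g => Crossed g w
        (w.1 + t * d.1, w.2.1 + t * d.2.1, w.2.2 + t * d.2.2)) ⊆ T.erase f := by
      intro g hg
      rw [Finset.mem_filter] at hg
      obtain ⟨hgH, hc1, hc2⟩ := hg
      rw [hw] at hc1 hc2
      have hgF : g ∈ F := by
        by_contra hgF
        rw [hcon g hgH hgF] at hc1 hc2
        simp only [mul_zero, add_zero] at hc1 hc2
        exact hc2 (mul_self_pos.2 hc1)
      have hsl := hpar g hgF
      -- the parameter of g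
      have hlt : |hgt g w / slp g d| < |hgt f w / slp f d| := by
        have e : |hgt f w / slp f d| = |t| := by rw [ht, abs_neg]
        rw [e]
        set r := hgt g w / slp g d with hr
        have hgr : hgt g w = r * slp g d := by rw [hr]; field_simp
        rw [hgr] at hc1 hc2
        have h0 : r + t ≠ 0 := by
          intro h0; apply hc1; rw [← add_mul, h0, zero_mul]
        have h1 : r * (r + t) ≤ 0 := by
          by_contra h1
          push Not at h1
          apply hc2
          have : r * slp g d * (r * slp g d + t * slp g d) = (r * (r + t)) * (slp g d)^2 := by ring
          rw [this]
          positivity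
        have h2 : 0 < (r + t)^2 := by positivity
        rw [← sq_lt_sq]
        nlinarith
      rw [Finset.mem_erase]
      refine ⟨?_, hs f hf g hgF hlt⟩
      rintro rfl
      exact lt_irrefl _ hlt
    have := Finset.card_le_card hsub
    rw [Finset.card_erase_of_mem hf, hc] at this
    have : 0 < T.card := Finset.card_pos.2 ⟨f, hf⟩
    omega

lemma exists_pairs {α β : Type*} [DecidableEq α] [DecidableEq β] (S : Finset α) (m : ℕ)
    (P : α → β → Prop) (h : ∀ a ∈ S, ∃ T : Finset β, T.card = m ∧ ∀ b ∈ T, P a b) :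
    ∃ N : Finset (α × β), N.card = S.card * m ∧ ∀ x ∈ N, x.1 ∈ S ∧ P x.1 x.2 := by
  choose! T hT hP using h
  refine ⟨S.biUnion (fun a => (T a).image (fun b => (a, b))), ?_, ?_⟩
  · rw [Finset.card_biUnion]
    · rw [Finset.sum_congr rfl (g := fun _ => m)]
      · simp
      · intro a ha
        rw [Finset.card_image_of_injective _ (fun b b' hb => (Prod.mk.inj hb).2), hT a ha]
    · intro a _ a' _ hne
      simp only [Function.onFun]
      rw [Finset.disjoint_left]
      intro x hx hx'
      simp only [Finset.mem_image] at hx hx'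
      obtain ⟨b, _, rfl⟩ := hx
      obtain ⟨b', _, hb'⟩ := hx'
      exact hne (Prod.mk.inj hb').1.symm
  · intro x hx
    simp only [Finset.mem_biUnion, Finset.mem_image] at hx
    obtain ⟨a, ha, b, hb, rfl⟩ := hx
    exact ⟨ha, hP a ha b hb⟩

lemma exists_generic (H : Finset Plane) (hH : PlanesGenPos H) :
    ∃ s : ℝ, ∀ f ∈ H, ∀ g ∈ H, f ≠ g → f.1 + s * f.2.1 ≠ g.1 + s * g.2.1 := by
  classical
  obtain ⟨s, hs⟩ := Infinite.exists_notMem_finset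
    ((H ×ˢ H).image (fun x : Plane × Plane => (x.2.1 - x.1.1) / (x.1.2.1 - x.2.2.1)))
  refine ⟨s, fun f hf g hg hfg heq => ?_⟩
  by_cases h2 : f.2.1 = g.2.1
  · rw [h2] at heq
    exact hH.1 f hf g hg hfg (by rw [h2]; simpa using heq)
  · apply hs
    rw [Finset.mem_image]
    refine ⟨(f, g), by simp [hf, hg], ?_⟩
    have : f.2.1 - g.2.1 ≠ 0 := sub_ne_zero.2 h2
    simp only
    field_simp
    linarith

open Classical in
lemma near_vertices (H : Finset Plane) (hH : PlanesGenPos H) (u : Pt) (m : ℕ)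
    (hm : m + 2 ≤ H.card) :
    ∃ N : Finset ((Plane × Plane) × Plane), N.card = m ^ 3 ∧ ∀ t ∈ N,
      (t.1.1 ∈ H ∧ t.1.2 ∈ H ∧ t.2 ∈ H ∧ t.1.1 ≠ t.1.2 ∧ t.1.1 ≠ t.2 ∧ t.1.2 ≠ t.2) ∧
      ∃ w : Pt, hgt t.1.1 w = 0 ∧ hgt t.1.2 w = 0 ∧ hgt t.2 w = 0 ∧
        (H.filter (fun g => hgt g u * hgt g w < 0)).card + 3 ≤ 3 * m := by
  obtain ⟨s, hs⟩ := exists_generic H hH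
  obtain ⟨T1, hT1, hc1, hw1⟩ := line_step H H u (0, 0, 1) m (Finset.Subset.refl _) (by omega)
    (by intro g _; simp [slp]) (by intro g hg hg'; exact absurd hg hg')
  obtain ⟨N2, hN2, hP2⟩ := exists_pairs T1 m (fun f g => g ∈ H ∧ f ≠ g ∧
      ∃ w1 w2 : Pt, hgt f w2 = 0 ∧ hgt g w2 = 0 ∧
      (H.filter (fun g => Crossed g u w1)).card + 1 ≤ m ∧
      (H.filter (fun g => Crossed g w1 w2)).card + 1 ≤ m) (by
    intro f hf
    have hfH := hT1 hf
    obtain ⟨w1, hfw, -, hcw⟩ := hw1 f hf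
    obtain ⟨T2, hT2, hc2, hw2⟩ := line_step H (H.erase f) w1 (1, s, f.1 + s * f.2.1) m
      (Finset.erase_subset _ _) (by rw [Finset.card_erase_of_mem hfH]; omega)
      (by
        intro g hg h0
        rw [Finset.mem_erase] at hg
        apply hs f hfH g hg.2 (Ne.symm hg.1)
        unfold slp at h0
        simp only at h0
        linarith)
      (by
        intro g hg hg'
        have : g = f := by
          by_contra hne
          exact hg' (Finset.mem_erase.2 ⟨hne, hg⟩)
        subst this
        unfold slp; simp only; ring)
    refine ⟨T2, hc2, fun g hg => ?_⟩
    have hgm := Finset.mem_erase.1 (hT2 hg)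
    obtain ⟨w2, hgw2, hk, hcw2⟩ := hw2 g hg
    refine ⟨hgm.2, Ne.symm hgm.1, w1, w2, ?_, hgw2, hcw, hcw2⟩
    rw [hk f hfH (by simp), hfw])
  obtain ⟨N3, hN3, hP3⟩ := exists_pairs N2 m (fun fg h => h ∈ H ∧ fg.1 ≠ h ∧ fg.2 ≠ h ∧
      ∃ w1 w2 w3 : Pt, hgt fg.1 w3 = 0 ∧ hgt fg.2 w3 = 0 ∧ hgt h w3 = 0 ∧
      (H.filter (fun g => Crossed g u w1)).card + 1 ≤ m ∧
      (H.filter (fun g => Crossed g w1 w2)).card + 1 ≤ m ∧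
      (H.filter (fun g => Crossed g w2 w3)).card + 1 ≤ m) (by
    rintro ⟨f, g⟩ hfg
    obtain ⟨hfT, hgH, hne, w1, w2, hfw, hgw, hcw1, hcw2⟩ := hP2 _ hfg
    simp only at hfT hgH hne hfw hgw
    have hfH := hT1 hfT
    have hgE : g ∈ H.erase f := Finset.mem_erase.2 ⟨Ne.symm hne, hgH⟩
    obtain ⟨T3, hT3, hc3, hw3⟩ := line_step H ((H.erase f).erase g) w2
      (-(g.2.1 - f.2.1), g.1 - f.1, f.1 * (-(g.2.1 - f.2.1)) + f.2.1 * (g.1 - f.1)) m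
      ((Finset.erase_subset _ _).trans (Finset.erase_subset _ _))
      (by rw [Finset.card_erase_of_mem hgE, Finset.card_erase_of_mem hfH]; omega)
      (by
        intro h hh h0
        rw [Finset.mem_erase, Finset.mem_erase] at hh
        apply gp_det hH hfH hgH hh.2.2 hne (Ne.symm hh.2.1) (Ne.symm hh.1)
        unfold slp at h0
        unfold gdet
        simp only at h0
        linarith)
      (by
        intro h hh hh'
        have : h = f ∨ h = g := by
          by_contra hcon
          push Not at hcon
          exact hh' (Finset.mem_erase.2 ⟨hcon.2, Finset.mem_erase.2 ⟨hcon.1, hh⟩⟩)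
        rcases this with rfl | rfl
        · unfold slp; simp only; ring
        · unfold slp; simp only; ring)
    refine ⟨T3, hc3, fun h hh => ?_⟩
    have hhm := Finset.mem_erase.1 (hT3 hh)
    have hhm2 := Finset.mem_erase.1 hhm.2
    obtain ⟨w3, hhw3, hk, hcw3⟩ := hw3 h hh
    refine ⟨hhm2.2, Ne.symm hhm2.1, Ne.symm hhm.1, w1, w2, w3, ?_, ?_, hhw3, hcw1, hcw2, hcw3⟩
    · simp only; rw [hk f hfH (by simp), hfw]
    · simp only; rw [hk g hgH (by simp), hgw])
  refine ⟨N3, by rw [hN3, hN2, hc1]; ring, fun t ht => ?_⟩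
  obtain ⟨ht2, hhH, hne1, hne2, w1, w2, w3, k1, k2, k3, c1, c2, c3⟩ := hP3 t ht
  obtain ⟨hfT, hgH, hne, -⟩ := hP2 _ ht2
  refine ⟨⟨hT1 hfT, hgH, hhH, hne, hne1, hne2⟩, w3, k1, k2, k3, ?_⟩
  have hsub : H.filter (fun g => hgt g u * hgt g w3 < 0) ⊆
      (H.filter (fun g => Crossed g u w1) ∪ H.filter (fun g => Crossed g w1 w2)) ∪
        H.filter (fun g => Crossed g w2 w3) := by
    intro g hg
    rw [Finset.mem_filter] at hg
    obtain ⟨hgH, hlt⟩ := hg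
    simp only [Finset.mem_union, Finset.mem_filter, hgH, true_and]
    by_contra hcon
    push Not at hcon
    obtain ⟨⟨n1, n2⟩, n3⟩ := hcon
    unfold Crossed at n1 n2 n3
    push Not at n1 n2 n3
    have z3 : hgt g w3 ≠ 0 := by rintro h; rw [h] at hlt; simp at hlt
    have p3 := n3 z3
    have z2 : hgt g w2 ≠ 0 := by rintro h; rw [h] at p3; simp at p3
    have p2 := n2 z2
    have z1 : hgt g w1 ≠ 0 := by rintro h; rw [h] at p2; simp at p2
    have p1 := n1 z1
    have := mul_pos (mul_pos p1 p2) p3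
    have e : hgt g u * hgt g w1 * (hgt g w1 * hgt g w2) * (hgt g w2 * hgt g w3)
      = (hgt g u * hgt g w3) * (hgt g w1 * hgt g w2)^2 := by ring
    rw [e] at this
    have hh : 0 < (hgt g w1 * hgt g w2)^2 := by positivity
    nlinarith
  have h1 := Finset.card_le_card hsub
  have h2 := Finset.card_union_le (H.filter (fun g => Crossed g u w1) ∪
    H.filter (fun g => Crossed g w1 w2)) (H.filter (fun g => Crossed g w2 w3))
  have h3 := Finset.card_union_le (H.filter (fun g => Crossed g u w1))
    (H.filter (fun g => Crossed g w1 w2))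
  omega

lemma cylinder_weight {α : Type*} [DecidableEq α] (H A B : Finset α) (p : ℝ)
    (hA : A ⊆ H) (hB : B ⊆ H) (hAB : Disjoint A B) :
    ∑ R ∈ H.powerset.filter (fun R => A ⊆ R ∧ Disjoint B R),
      p ^ R.card * (1 - p) ^ (H \ R).card = p ^ A.card * (1 - p) ^ B.card := by
  set F := H \ (A ∪ B) with hFdef
  have key : ∑ R ∈ F.powerset, p ^ R.card * (1 - p) ^ (F.card - R.card) = 1 := by
    rw [Finset.sum_pow_mul_eq_add_pow]; simp
  have : p ^ A.card * (1 - p) ^ B.card =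
      ∑ R ∈ F.powerset, p ^ (A ∪ R).card * (1 - p) ^ (H \ (A ∪ R)).card := by
    refine (mul_one (p ^ A.card * (1 - p) ^ B.card)).symm.trans ?_
    refine (congrArg (fun z => (p ^ A.card * (1 - p) ^ B.card) * z) key.symm).trans ?_
    rw [Finset.mul_sum]
    apply Finset.sum_congr rfl
    intro R hR
    rw [Finset.mem_powerset] at hR
    have d1 : Disjoint A R := by
      rw [Finset.disjoint_left]; intro x hx hxR
      have := hR hxR
      simp [hFdef, hx] at this
    have d2 : H \ (A ∪ R) = B ∪ (F \ R) := by
      ext x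
      have h1 := @hA x
      have h2 := @hB x
      have h3 := @hR x
      have h4 : x ∈ A → x ∉ B := fun h => Finset.disjoint_left.1 hAB h
      simp only [hFdef, Finset.mem_sdiff, Finset.mem_union] at *
      tauto
    have d3 : Disjoint B (F \ R) := by
      rw [Finset.disjoint_left]; intro x hx hxR
      simp [hFdef, hx] at hxR
    rw [d2, Finset.card_union_of_disjoint d1, Finset.card_union_of_disjoint d3,
      Finset.card_sdiff_of_subset hR, pow_add, pow_add]
    ring
  rw [this]
  symm
  apply Finset.sum_bij (fun R _ => A ∪ R)
  · intro R hR
    rw [Finset.mem_powerset] at hR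
    simp only [Finset.mem_filter, Finset.mem_powerset]
    refine ⟨Finset.union_subset hA (hR.trans Finset.sdiff_subset), Finset.subset_union_left, ?_⟩
    rw [Finset.disjoint_left]; intro x hx hxR
    rcases Finset.mem_union.1 hxR with h | h
    · exact Finset.disjoint_left.1 hAB h hx
    · have := hR h
      simp [hFdef, hx] at this
  · intro R hR R' hR' heq
    rw [Finset.mem_powerset] at hR hR'
    ext x
    have h3 := @hR x
    have h3' := @hR' x
    have := Finset.ext_iff.1 heq x
    simp only [hFdef, Finset.mem_sdiff, Finset.mem_union] at *
    tauto
  · intro R hR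
    simp only [Finset.mem_filter, Finset.mem_powerset] at hR
    obtain ⟨h1, h2, h3⟩ := hR
    refine ⟨R \ A, ?_, ?_⟩
    · rw [Finset.mem_powerset]
      intro x hx
      have h1 := @h1 x
      have h3 : x ∈ B → x ∉ R := fun h => Finset.disjoint_left.1 h3 h
      simp only [hFdef, Finset.mem_sdiff, Finset.mem_union] at *
      tauto
    · exact Finset.union_sdiff_of_subset h2
  · intro R hR; rfl

/-- A Bollobas / Tuza type inequality for set pairs. -/
lemma tuza {ι α : Type*} [DecidableEq α] (I : Finset ι) (A B : ι → Finset α) (H : Finset α)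
    (p : ℝ) (hp0 : 0 ≤ p) (hp1 : p ≤ 1) (hA : ∀ i ∈ I, A i ⊆ H) (hB : ∀ i ∈ I, B i ⊆ H)
    (hAB : ∀ i ∈ I, Disjoint (A i) (B i))
    (hcr : ∀ i ∈ I, ∀ j ∈ I, Disjoint (A i) (B j) → Disjoint (A j) (B i) → i = j) :
    ∑ i ∈ I, p ^ (A i).card * (1 - p) ^ (B i).card ≤ 1 := by
  classical
  have hq : 0 ≤ 1 - p := by linarith
  have key : ∑ R ∈ H.powerset, p ^ R.card * (1 - p) ^ (H.card - R.card) = 1 := by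
    rw [Finset.sum_pow_mul_eq_add_pow]; simp
  have key' : ∑ R ∈ H.powerset, p ^ R.card * (1 - p) ^ (H \ R).card = 1 := by
    refine Eq.trans ?_ key
    apply Finset.sum_congr rfl
    intro R hR
    rw [Finset.card_sdiff_of_subset (Finset.mem_powerset.1 hR)]
  refine le_of_le_of_eq ?_ key'
  rw [Finset.sum_congr rfl (fun i hi =>
    (cylinder_weight H (A i) (B i) p (hA i hi) (hB i hi) (hAB i hi)).symm),
    ← Finset.sum_biUnion]
  · apply Finset.sum_le_sum_of_subset_of_nonneg
    · intro R hR
      simp only [Finset.mem_biUnion, Finset.mem_filter] at hR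
      obtain ⟨i, _, h, _⟩ := hR
      exact h
    · intro R _ _; positivity
  · intro i hi j hj hij
    simp only [Function.onFun]
    rw [Finset.disjoint_left]
    intro R h1 h2
    simp only [Finset.mem_filter] at h1 h2
    apply hij
    apply hcr i hi j hj
    · exact (h2.2.2.mono_right h1.2.1).symm
    · exact (h1.2.2.mono_right h2.2.1).symm

open Classical in
/-- Vertices at level at most `K` lying on `f`, with `f` the median plane of the triple, and with
fixed orientation. -/
lemma class_bound (H : Finset Plane) (hH : PlanesGenPos H) (s : ℝ) (K : ℕ) (hK : 1 ≤ K)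
    (f : Plane) (hf : f ∈ H) (ε : ℝ) (I : Finset (Plane × Plane))
    (hI : ∀ t ∈ I, t.1 ∈ H ∧ t.2 ∈ H ∧ t.1.1 + s * t.1.2.1 < f.1 + s * f.2.1 ∧
      f.1 + s * f.2.1 < t.2.1 + s * t.2.2.1 ∧ 0 < ε * gdet f t.1 t.2 ∧
      ∃ w : Pt, hgt f w = 0 ∧ hgt t.1 w = 0 ∧ hgt t.2 w = 0 ∧ level H w ≤ K) :
    (I.card : ℝ) ≤ 8 * (K : ℝ) ^ 2 := by
  choose! h1 h2 k1 k2 hD w w0 w1 w2 hl using hI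
  have hKr : (1 : ℝ) ≤ K := by exact_mod_cast hK
  have hK0 : (0 : ℝ) < K := by linarith
  set p : ℝ := 1 / (2 * K) with hp
  have hp0 : 0 < p := by positivity
  have hp1 : p ≤ 1 / 2 := by
    rw [hp]; apply one_div_le_one_div_of_le <;> linarith
  have T := tuza I (fun t => {t.1, t.2}) (fun t => H.filter (fun g => 0 < hgt g (w t))) H p hp0.le
    (by linarith)
    (by
      intro t ht x hx
      rcases Finset.mem_insert.1 hx with rfl | hx
      · exact h1 t ht
      · rw [Finset.mem_singleton.1 hx]; exact h2 t ht)
    (by intro t _; exact Finset.filter_subset _ _)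
    (by
      intro t ht
      rw [Finset.disjoint_left]
      intro x hx hx'
      rw [Finset.mem_filter] at hx'
      rcases Finset.mem_insert.1 hx with rfl | hx
      · linarith [w1 t ht]
      · rw [Finset.mem_singleton.1 hx] at hx'; linarith [w2 t ht])
    (by
      intro t ht t' ht' hd hd'
      have a1 : hgt t.1 (w t') ≤ 0 := by
        by_contra hc
        push Not at hc
        exact Finset.disjoint_left.1 hd (Finset.mem_insert_self _ _)
          (Finset.mem_filter.2 ⟨h1 t ht, hc⟩)
      have a2 : hgt t.2 (w t') ≤ 0 := by
        by_contra hc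
        push Not at hc
        exact Finset.disjoint_left.1 hd (by simp : t.2 ∈ ({t.1, t.2} : Finset Plane))
          (Finset.mem_filter.2 ⟨h2 t ht, hc⟩)
      have a1' : hgt t'.1 (w t) ≤ 0 := by
        by_contra hc
        push Not at hc
        exact Finset.disjoint_left.1 hd' (Finset.mem_insert_self _ _)
          (Finset.mem_filter.2 ⟨h1 t' ht', hc⟩)
      have a2' : hgt t'.2 (w t) ≤ 0 := by
        by_contra hc
        push Not at hc
        exact Finset.disjoint_left.1 hd' (by simp : t'.2 ∈ ({t'.1, t'.2} : Finset Plane))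
          (Finset.mem_filter.2 ⟨h2 t' ht', hc⟩)
      have b0 := w0 t ht
      have b1 := w1 t ht
      have b2 := w2 t ht
      have b0' := w0 t' ht'
      have b1' := w1 t' ht'
      have b2' := w2 t' ht'
      have c1 := k1 t ht
      have c2 := k2 t ht
      have c1' := k1 t' ht'
      have c2' := k2 t' ht'
      have D := hD t ht
      have D' := hD t' ht'
      have hDne : gdet f t.1 t.2 ≠ 0 := by rintro h; rw [h] at D; simp at D
      -- displacement along sweep direction
      set x := s * ((w t').1 - (w t).1) - ((w t').2.1 - (w t).2.1) with hx
      have id1 : gdet f t.1 t.2 * x =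
          ((t.2.1 + s * t.2.2.1) - (f.1 + s * f.2.1)) * (- hgt t.1 (w t')) +
          ((f.1 + s * f.2.1) - (t.1.1 + s * t.1.2.1)) * (- hgt t.2 (w t')) := by
        unfold hgt peval at b0 b1 b2 b0' ⊢
        unfold gdet
        rw [hx]
        simp only at *
        linear_combination ((t.2.1 + s * t.2.2.1) - (f.1 + s * f.2.1)) * (b0' - b0 + b1) + ((f.1 + s * f.2.1) - (t.1.1 + s * t.1.2.1)) * (b0' - b0 + b2)
      have id2 : gdet f t'.1 t'.2 * (-x) =
          ((t'.2.1 + s * t'.2.2.1) - (f.1 + s * f.2.1)) * (- hgt t'.1 (w t)) +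
          ((f.1 + s * f.2.1) - (t'.1.1 + s * t'.1.2.1)) * (- hgt t'.2 (w t)) := by
        unfold hgt peval at b0' b1' b2' b0 ⊢
        unfold gdet
        rw [hx]
        simp only at *
        linear_combination ((t'.2.1 + s * t'.2.2.1) - (f.1 + s * f.2.1)) * (b0 - b0' + b1') + ((f.1 + s * f.2.1) - (t'.1.1 + s * t'.1.2.1)) * (b0 - b0' + b2')
      have n1 : 0 ≤ gdet f t.1 t.2 * x := by
        rw [id1]
        apply add_nonneg <;> apply mul_nonneg <;> linarith
      have n2 : 0 ≤ gdet f t'.1 t'.2 * (-x) := by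
        rw [id2]
        apply add_nonneg <;> apply mul_nonneg <;> linarith
      have hx0 : x = 0 := by
        by_contra hxne
        have hε : ε ≠ 0 := by rintro h; rw [h] at D; simp at D
        have hx2 : 0 < x ^ 2 := by positivity
        have hε2 : 0 < ε ^ 2 := by positivity
        have hDD := mul_pos D D'
        have m1 : 0 ≤ ε ^ 2 * ((gdet f t.1 t.2 * x) * (gdet f t'.1 t'.2 * (-x))) :=
          mul_nonneg hε2.le (mul_nonneg n1 n2)
        have m2 := mul_pos hDD hx2
        nlinarith
      rw [hx0, mul_zero] at id1
      have z1 : hgt t.1 (w t') = 0 := by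
        have r1 : 0 ≤ ((f.1 + s * f.2.1) - (t.1.1 + s * t.1.2.1)) * (- hgt t.2 (w t')) := by
          apply mul_nonneg <;> linarith
        by_contra hne
        have : 0 < - hgt t.1 (w t') := by
          have := lt_of_le_of_ne a1 hne
          linarith
        have := mul_pos (sub_pos.2 c2) this
        linarith
      have z2 : hgt t.2 (w t') = 0 := by
        have r1 : 0 ≤ ((t.2.1 + s * t.2.2.1) - (f.1 + s * f.2.1)) * (- hgt t.1 (w t')) := by
          apply mul_nonneg <;> linarith
        by_contra hne
        have : 0 < - hgt t.2 (w t') := by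
          have := lt_of_le_of_ne a2 hne
          linarith
        have := mul_pos (sub_pos.2 c1) this
        linarith
      have four := hH.2.2
      have n12 : t.1 ≠ t.2 := by rintro h; rw [h] at c1; linarith
      have nf1 : f ≠ t.1 := by rintro h; rw [← h] at c1; linarith
      have nf2 : f ≠ t.2 := by rintro h; rw [← h] at c2; linarith
      have only : ∀ g ∈ H, hgt g (w t') = 0 → g = f ∨ g = t.1 ∨ g = t.2 := by
        intro g hg hg0
        by_contra hc
        push Not at hc
        apply four f hf t.1 (h1 t ht) t.2 (h2 t ht) g hg nf1 nf2 (Ne.symm hc.1) n12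
          (Ne.symm hc.2.1) (Ne.symm hc.2.2)
        refine ⟨((w t').1, (w t').2.1), ?_⟩
        unfold hgt at *
        refine ⟨?_, ?_, ?_⟩ <;> linarith
      have e1 : t'.1 = t.1 := by
        rcases only t'.1 (h1 t' ht') b1' with h | h | h
        · rw [h] at c1'; linarith
        · exact h
        · rw [h] at c1'; linarith
      have e2 : t'.2 = t.2 := by
        rcases only t'.2 (h2 t' ht') b2' with h | h | h
        · rw [h] at c2'; linarith
        · rw [h] at c2'; linarith
        · exact h
      exact (Prod.ext e1 e2).symm)
  have hb : (1 : ℝ) / 2 ≤ (1 - p) ^ K := by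
    have := one_add_mul_le_pow (a := -p) (by linarith) K
    have e : (K : ℝ) * (-p) = - (1 / 2) := by rw [hp]; field_simp
    rw [e] at this
    have e2 : 1 + -p = 1 - p := by ring
    rw [e2] at this
    linarith
  have hlow : ∀ t ∈ I, p ^ 2 * (1 / 2) ≤ p ^ ({t.1, t.2} : Finset Plane).card *
      (1 - p) ^ (H.filter (fun g => 0 < hgt g (w t))).card := by
    intro t ht
    have n12 : t.1 ≠ t.2 := by
      rintro h
      have := k1 t ht
      have := k2 t ht
      rw [h] at *; linarith
    rw [Finset.card_pair n12]
    apply mul_le_mul_of_nonneg_left _ (by positivity)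
    refine hb.trans ?_
    apply pow_le_pow_of_le_one (by linarith) (by linarith)
    refine le_trans (le_of_eq ?_) (hl t ht)
    unfold level hgt
    congr 1
    apply Finset.filter_congr
    intro g _
    exact sub_pos
  have hs := (Finset.sum_le_sum hlow).trans T
  rw [Finset.sum_const, nsmul_eq_mul] at hs
  have e : p ^ 2 * (1 / 2) = 1 / (8 * (K : ℝ) ^ 2) := by rw [hp]; field_simp; norm_num
  rw [e, mul_one_div, div_le_one (by positivity)] at hs
  exact hs

/-- The triple `(f,g,h)` of distinct planes of `H` meets in a point of level at most `K`. -/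
def LowTriple (H : Finset Plane) (K : ℕ) (f g h : Plane) : Prop :=
  (f ∈ H ∧ g ∈ H ∧ h ∈ H ∧ f ≠ g ∧ f ≠ h ∧ g ≠ h) ∧
    ∃ w : Pt, hgt f w = 0 ∧ hgt g w = 0 ∧ hgt h w = 0 ∧ level H w ≤ K

lemma LowTriple.swap12 {H : Finset Plane} {K : ℕ} {f g h : Plane} (t : LowTriple H K f g h) :
    LowTriple H K g f h := by
  obtain ⟨⟨a, b, c, d, e, i⟩, w, x, y, z, l⟩ := t
  exact ⟨⟨b, a, c, d.symm, i, e⟩, w, y, x, z, l⟩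

lemma LowTriple.swap23 {H : Finset Plane} {K : ℕ} {f g h : Plane} (t : LowTriple H K f g h) :
    LowTriple H K f h g := by
  obtain ⟨⟨a, b, c, d, e, i⟩, w, x, y, z, l⟩ := t
  exact ⟨⟨a, c, b, e, d, i.symm⟩, w, x, z, y, l⟩

open Classical in
lemma sorted_bound (H : Finset Plane) (hH : PlanesGenPos H) (s : ℝ) (K : ℕ) (hK : 1 ≤ K) :
    (((H ×ˢ (H ×ˢ H)).filter (fun t : Plane × Plane × Plane => LowTriple H K t.1 t.2.1 t.2.2 ∧
      t.2.1.1 + s * t.2.1.2.1 < t.1.1 + s * t.1.2.1 ∧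
      t.1.1 + s * t.1.2.1 < t.2.2.1 + s * t.2.2.2.1)).card : ℝ) ≤
      16 * (K : ℝ) ^ 2 * H.card := by
  set P : Plane → Plane → Plane → Prop := fun f g h => LowTriple H K f g h ∧
      g.1 + s * g.2.1 < f.1 + s * f.2.1 ∧ f.1 + s * f.2.1 < h.1 + s * h.2.1 with hP
  have hsub : ((H ×ˢ (H ×ˢ H)).filter (fun t : Plane × Plane × Plane => P t.1 t.2.1 t.2.2)) ⊆
      H.biUnion (fun f => ((H ×ˢ H).filter (fun t : Plane × Plane => P f t.1 t.2)).image
        (fun t => (f, t))) := by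
    rintro ⟨f, g, h⟩ ht
    simp only [Finset.mem_filter, Finset.mem_product] at ht
    simp only [Finset.mem_biUnion, Finset.mem_image, Finset.mem_filter, Finset.mem_product]
    exact ⟨f, ht.1.1, (g, h), ⟨ht.1.2, ht.2⟩, rfl⟩
  have hf : ∀ f ∈ H, ((((H ×ˢ H).filter (fun t : Plane × Plane => P f t.1 t.2)).card : ℕ) : ℝ) ≤
      16 * (K : ℝ) ^ 2 := by
    intro f hf
    have A := class_bound H hH s K hK f hf 1
      ((H ×ˢ H).filter (fun t : Plane × Plane => P f t.1 t.2 ∧ 0 < gdet f t.1 t.2)) (by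
        intro t ht
        simp only [Finset.mem_filter, Finset.mem_product] at ht
        obtain ⟨⟨a, b⟩, ⟨c, d, e⟩, i⟩ := ht
        exact ⟨a, b, d, e, by linarith, c.2⟩)
    have B := class_bound H hH s K hK f hf (-1)
      ((H ×ˢ H).filter (fun t : Plane × Plane => P f t.1 t.2 ∧ gdet f t.1 t.2 < 0)) (by
        intro t ht
        simp only [Finset.mem_filter, Finset.mem_product] at ht
        obtain ⟨⟨a, b⟩, ⟨c, d, e⟩, i⟩ := ht
        exact ⟨a, b, d, e, by linarith, c.2⟩)
    have hs : (H ×ˢ H).filter (fun t : Plane × Plane => P f t.1 t.2) ⊆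
      ((H ×ˢ H).filter (fun t : Plane × Plane => P f t.1 t.2 ∧ 0 < gdet f t.1 t.2)) ∪
      ((H ×ˢ H).filter (fun t : Plane × Plane => P f t.1 t.2 ∧ gdet f t.1 t.2 < 0)) := by
      intro t ht
      rw [Finset.mem_filter] at ht
      obtain ⟨a, b⟩ := ht
      obtain ⟨b1, b2, b3, b4, b5, b6⟩ := b.1.1
      have := gp_det hH b1 b2 b3 b4 b5 b6
      rw [Finset.mem_union, Finset.mem_filter, Finset.mem_filter]
      rcases lt_or_gt_of_ne this with h | h
      · exact Or.inr ⟨a, b, h⟩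
      · exact Or.inl ⟨a, b, h⟩
    have hc := (Finset.card_le_card hs).trans (Finset.card_union_le _ _)
    have hc' : ((((H ×ˢ H).filter (fun t : Plane × Plane => P f t.1 t.2)).card : ℕ) : ℝ) ≤
      (((H ×ˢ H).filter (fun t : Plane × Plane => P f t.1 t.2 ∧ 0 < gdet f t.1 t.2)).card : ℝ) +
      (((H ×ˢ H).filter (fun t : Plane × Plane => P f t.1 t.2 ∧ gdet f t.1 t.2 < 0)).card : ℝ) := by
      exact_mod_cast hc
    linarith
  have h1 := (Finset.card_le_card hsub).trans Finset.card_biUnion_le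
  have h2 : (((H ×ˢ (H ×ˢ H)).filter (fun t : Plane × Plane × Plane =>
      P t.1 t.2.1 t.2.2)).card : ℝ) ≤ ∑ f ∈ H, ((((H ×ˢ H).filter
        (fun t : Plane × Plane => P f t.1 t.2)).image (fun t => (f, t))).card : ℝ) := by
    exact_mod_cast h1
  refine h2.trans ?_
  have h3 : ∀ f ∈ H, ((((H ×ˢ H).filter
        (fun t : Plane × Plane => P f t.1 t.2)).image (fun t => (f, t))).card : ℝ) ≤
        16 * (K : ℝ) ^ 2 := by
    intro f hfH
    refine le_trans ?_ (hf f hfH)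
    exact_mod_cast Finset.card_image_le
  refine (Finset.sum_le_sum h3).trans ?_
  rw [Finset.sum_const, nsmul_eq_mul]
  linarith

open Classical in
lemma low_bound (H : Finset Plane) (hH : PlanesGenPos H) (K : ℕ) (hK : 1 ≤ K) :
    ((((H ×ˢ H) ×ˢ H).filter (fun t : (Plane × Plane) × Plane =>
      LowTriple H K t.1.1 t.1.2 t.2)).card : ℝ) ≤ 96 * (K : ℝ) ^ 2 * H.card := by
  obtain ⟨s, hs⟩ := exists_generic H hH
  have hb := sorted_bound H hH s K hK
  set S := (H ×ˢ (H ×ˢ H)).filter (fun t : Plane × Plane × Plane => LowTriple H K t.1 t.2.1 t.2.2 ∧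
      t.2.1.1 + s * t.2.1.2.1 < t.1.1 + s * t.1.2.1 ∧
      t.1.1 + s * t.1.2.1 < t.2.2.1 + s * t.2.2.2.1) with hS
  have hmem : ∀ f g h : Plane, LowTriple H K f g h → g.1 + s * g.2.1 < f.1 + s * f.2.1 →
      f.1 + s * f.2.1 < h.1 + s * h.2.1 → (f, g, h) ∈ S := by
    intro f g h ht h1 h2
    rw [hS, Finset.mem_filter]
    exact ⟨by simp [ht.1.1, ht.1.2.1, ht.1.2.2.1], ht, h1, h2⟩
  have hsub : ((H ×ˢ H) ×ˢ H).filter (fun t : (Plane × Plane) × Plane =>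
      LowTriple H K t.1.1 t.1.2 t.2) ⊆
      S.image (fun t => ((t.1, t.2.1), t.2.2)) ∪ S.image (fun t => ((t.1, t.2.2), t.2.1)) ∪
      (S.image (fun t => ((t.2.1, t.1), t.2.2)) ∪ S.image (fun t => ((t.2.2, t.1), t.2.1))) ∪
      (S.image (fun t => ((t.2.1, t.2.2), t.1)) ∪ S.image (fun t => ((t.2.2, t.2.1), t.1))) := by
    rintro ⟨⟨f, g⟩, h⟩ ht
    rw [Finset.mem_filter] at ht
    have L := ht.2
    simp only at L
    obtain ⟨b1, b2, b3, b4, b5, b6⟩ := L.1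
    have c1 := hs f b1 g b2 b4
    have c2 := hs f b1 h b3 b5
    have c3 := hs g b2 h b3 b6
    simp only [Finset.mem_union, Finset.mem_image]
    rcases lt_or_gt_of_ne c1 with d1 | d1 <;> rcases lt_or_gt_of_ne c2 with d2 | d2 <;>
      rcases lt_or_gt_of_ne c3 with d3 | d3
    · exact Or.inl (Or.inr (Or.inl ⟨(g, f, h), hmem _ _ _ L.swap12 d1 d3, rfl⟩))
    · exact Or.inr (Or.inl ⟨(h, f, g), hmem _ _ _ L.swap23.swap12 d2 d3, rfl⟩)
    · linarith
    · exact Or.inl (Or.inl (Or.inr ⟨(f, h, g), hmem _ _ _ L.swap23 d2 d1, rfl⟩))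
    · exact Or.inl (Or.inl (Or.inl ⟨(f, g, h), hmem _ _ _ L d1 d2, rfl⟩))
    · linarith
    · exact Or.inr (Or.inr ⟨(h, g, f), hmem _ _ _ L.swap12.swap23.swap12 d3 d2, rfl⟩)
    · exact Or.inl (Or.inr (Or.inr ⟨(g, h, f), hmem _ _ _ L.swap12.swap23 d3 d1, rfl⟩))
  have hc := Finset.card_le_card hsub
  have hc6 : (((H ×ˢ H) ×ˢ H).filter (fun t : (Plane × Plane) × Plane =>
      LowTriple H K t.1.1 t.1.2 t.2)).card ≤ 6 * S.card := by
    refine hc.trans ?_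
    refine (Finset.card_union_le _ _).trans ?_
    have e : 6 * S.card = ((S.card + S.card) + (S.card + S.card)) + (S.card + S.card) := by ring
    rw [e]
    apply add_le_add
    · refine (Finset.card_union_le _ _).trans ?_
      apply add_le_add <;>
      · refine (Finset.card_union_le _ _).trans ?_
        exact add_le_add Finset.card_image_le Finset.card_image_le
    · refine (Finset.card_union_le _ _).trans ?_
      exact add_le_add Finset.card_image_le Finset.card_image_le
  have : ((((H ×ˢ H) ×ˢ H).filter (fun t : (Plane × Plane) × Plane =>
      LowTriple H K t.1.1 t.1.2 t.2)).card : ℝ) ≤ 6 * S.card := by exact_mod_cast hc6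
  linarith

open Classical in
lemma cdist_le_of_vertex (H : Finset Plane) (hH : PlanesGenPos H) (u v w : Pt) (f g h : Plane)
    (hf : f ∈ H) (hg : g ∈ H) (hh : h ∈ H) (hfg : f ≠ g) (hfh : f ≠ h) (hgh : g ≠ h)
    (w0 : hgt f w = 0) (w1 : hgt g w = 0) (w2 : hgt h w = 0)
    (s0 : 0 < hgt f u ↔ 0 < hgt f v) (s1 : 0 < hgt g u ↔ 0 < hgt g v)
    (s2 : 0 < hgt h u ↔ 0 < hgt h v) :
    cdist H u v ≤ (H.filter (fun i => hgt i u * hgt i w < 0)).card +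
      (H.filter (fun i => hgt i v * hgt i w < 0)).card := by
  have aux : ∀ a b : ℝ, (0 < a ↔ 0 < b) → ¬ (a * b < 0) := by
    intro a b hab hlt
    rcases mul_neg_iff.1 hlt with ⟨h1, h2⟩ | ⟨h1, h2⟩
    · linarith [hab.1 h1]
    · linarith [hab.2 h2]
  refine le_trans (Finset.card_le_card ?_) (Finset.card_union_le _ _)
  intro i hi
  rw [Finset.mem_filter] at hi
  obtain ⟨hiH, hlt⟩ := hi
  change hgt i u * hgt i v < 0 at hlt
  simp only [Finset.mem_union, Finset.mem_filter, hiH, true_and]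
  have if0 : i ≠ f := by rintro rfl; exact aux _ _ s0 hlt
  have if1 : i ≠ g := by rintro rfl; exact aux _ _ s1 hlt
  have if2 : i ≠ h := by rintro rfl; exact aux _ _ s2 hlt
  have hne : hgt i w ≠ 0 := by
    intro h0
    apply hH.2.2 f hf g hg h hh i hiH hfg hfh (Ne.symm if0) hgh (Ne.symm if1) (Ne.symm if2)
    refine ⟨(w.1, w.2.1), ?_⟩
    unfold hgt at *
    refine ⟨?_, ?_, ?_⟩ <;> linarith
  by_contra hc
  push Not at hc
  have h1 := mul_nonneg hc.1 hc.2
  have h2 : 0 < (hgt i w) ^ 2 := by positivity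
  nlinarith

open Classical in
lemma level_le_of_near (H : Finset Plane) (u w : Pt) (hu : ∀ f ∈ H, hgt f u ≠ 0) :
    level H w ≤ level H u + (H.filter (fun i => hgt i u * hgt i w < 0)).card := by
  refine le_trans (Finset.card_le_card ?_) (Finset.card_union_le _ _)
  intro i hi
  rw [Finset.mem_filter] at hi
  obtain ⟨hiH, hlt⟩ := hi
  simp only [Finset.mem_union, Finset.mem_filter, hiH, true_and]
  have hw : 0 < hgt i w := sub_pos.2 hlt
  rcases lt_or_gt_of_ne (hu i hiH) with h | h
  · right; exact mul_neg_of_neg_of_pos h hw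
  · left; exact sub_pos.1 h

/-- There is a constant `C > 0` such that: for any set `H` of `n ≥ 3` nonvertical planes in
general position, any real `k ≥ 1`, and any finite set `Q` of points avoiding all planes of
`H`, each at level between `k` and `2k`, with pairwise crossing distances at least `(3/2)k`,
one has `|Q| ≤ C·n/k`. -/
theorem packing_bound :
    ∃ C : ℝ, 0 < C ∧
      ∀ H : Finset Plane, 3 ≤ H.card → PlanesGenPos H →
        ∀ k : ℝ, 1 ≤ k →
          ∀ Q : Finset Pt,
            (∀ q ∈ Q, ∀ f ∈ H, peval f (q.1, q.2.1) ≠ q.2.2) →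
            (∀ q ∈ Q, k ≤ (level H q : ℝ) ∧ (level H q : ℝ) ≤ 2 * k) →
            (∀ u ∈ Q, ∀ v ∈ Q, u ≠ v → (3 / 2) * k ≤ (cdist H u v : ℝ)) →
            (Q.card : ℝ) ≤ C * (H.card : ℝ) / k := by
  classical
  refine ⟨1000000, by norm_num, ?_⟩
  intro H hn hH k hk Q hoff hlev hdist
  have hk0 : 0 < k := by linarith
  rcases Q.eq_empty_or_nonempty with rfl | ⟨q0, hq0⟩
  · simp only [Finset.card_empty, Nat.cast_zero]; positivity
  have hoff' : ∀ q ∈ Q, ∀ f ∈ H, hgt f q ≠ 0 := by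
    intro q hq f hf h0
    exact hoff q hq f hf (sub_eq_zero.1 h0).symm
  have hkn : k ≤ H.card := by
    refine (hlev q0 hq0).1.trans ?_
    exact_mod_cast Finset.card_filter_le _ _
  set m : ℕ := ⌈k / 4⌉₊ with hm
  have hm1 : k / 4 ≤ m := Nat.le_ceil _
  have hm2 : (m : ℝ) < k / 4 + 1 := Nat.ceil_lt_add_one (by positivity)
  have hmn : m + 2 ≤ H.card := by
    rcases Nat.lt_or_ge H.card 4 with h4 | h4
    · have h3 : H.card = 3 := by omega
      rw [h3] at hkn
      push_cast at hkn
      have : (m : ℝ) < 2 := by linarith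
      have : m < 2 := by exact_mod_cast this
      omega
    · have h4' : (4 : ℝ) ≤ H.card := by exact_mod_cast h4
      have : (m : ℝ) + 2 < H.card + 1 := by linarith
      have : m + 2 < H.card + 1 := by exact_mod_cast this
      omega
  set K : ℕ := ⌈11 * k / 4⌉₊ with hKdef
  have hK1 : 11 * k / 4 ≤ K := Nat.le_ceil _
  have hK2 : (K : ℝ) < 11 * k / 4 + 1 := Nat.ceil_lt_add_one (by positivity)
  have hK : 1 ≤ K := by
    have : (1 : ℝ) ≤ K := by linarith
    exact_mod_cast this
  obtain ⟨N, hN, hP⟩ := exists_pairs Q (m ^ 3)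
    (fun (u : Pt) (t : (Plane × Plane) × Plane) =>
      (t.1.1 ∈ H ∧ t.1.2 ∈ H ∧ t.2 ∈ H ∧ t.1.1 ≠ t.1.2 ∧ t.1.1 ≠ t.2 ∧ t.1.2 ≠ t.2) ∧
      ∃ w : Pt, hgt t.1.1 w = 0 ∧ hgt t.1.2 w = 0 ∧ hgt t.2 w = 0 ∧
        (H.filter (fun g => hgt g u * hgt g w < 0)).card + 3 ≤ 3 * m)
    (fun u _ => near_vertices H hH u m hmn)
  have hLB := low_bound H hH K hK
  set O := ((H ×ˢ H) ×ˢ H).filter (fun t : (Plane × Plane) × Plane =>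
      LowTriple H K t.1.1 t.1.2 t.2) with hO
  have hcard : N.card ≤ (O ×ˢ (Finset.univ : Finset (Bool × Bool × Bool))).card := by
    apply Finset.card_le_card_of_injOn (fun x => (x.2, decide (0 < hgt x.2.1.1 x.1),
      decide (0 < hgt x.2.1.2 x.1), decide (0 < hgt x.2.2 x.1)))
    · rintro ⟨u, t⟩ hx
      obtain ⟨huQ, ⟨b1, b2, b3, b4, b5, b6⟩, w, w0, w1, w2, hc⟩ := hP _ hx
      simp only at huQ b1 b2 b3 b4 b5 b6 w0 w1 w2 hc
      have hlow : level H w ≤ K := by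
        have h1 := level_le_of_near H u w (hoff' u huQ)
        have h2 := (hlev u huQ).2
        have h1' : (level H w : ℝ) ≤ level H u +
          (H.filter (fun i => hgt i u * hgt i w < 0)).card := by exact_mod_cast h1
        have hc' : ((H.filter (fun g => hgt g u * hgt g w < 0)).card : ℝ) + 3 ≤ 3 * m := by
          exact_mod_cast hc
        have : (level H w : ℝ) ≤ K := by linarith
        exact_mod_cast this
      simp only [Finset.coe_product, Set.mem_prod, Finset.mem_coe, Finset.mem_univ, and_true]
      rw [hO, Finset.mem_filter]
      exact ⟨by simp [b1, b2, b3], ⟨b1, b2, b3, b4, b5, b6⟩, w, w0, w1, w2, hlow⟩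
    · rintro ⟨u, t⟩ hx ⟨v, t'⟩ hy heq
      simp only [Prod.mk.injEq, decide_eq_decide] at heq
      obtain ⟨rfl, s0, s1, s2⟩ := heq
      obtain ⟨huQ, ⟨b1, b2, b3, b4, b5, b6⟩, w, w0, w1, w2, hc⟩ := hP _ hx
      obtain ⟨hvQ, -, w', w0', w1', w2', hc'⟩ := hP _ hy
      simp only at huQ b1 b2 b3 b4 b5 b6 w0 w1 w2 hc hvQ w0' w1' w2' hc'
      have hww := vertex_unique (gp_det hH b1 b2 b3 b4 b5 b6) w0' w1' w2' w0 w1 w2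
      subst hww
      by_contra hne
      have huv : u ≠ v := by rintro rfl; exact hne rfl
      have h1 := cdist_le_of_vertex H hH u v w' _ _ _ b1 b2 b3 b4 b5 b6 w0 w1 w2 s0 s1 s2
      have h2 := hdist u huQ v hvQ huv
      have h3 : cdist H u v + 6 ≤ 6 * m := by omega
      have h3' : (cdist H u v : ℝ) + 6 ≤ 6 * m := by exact_mod_cast h3
      linarith
  rw [hN, Finset.card_product] at hcard
  have h8 : (Finset.univ : Finset (Bool × Bool × Bool)).card = 8 := by decide
  rw [h8] at hcard
  have hcard' : (Q.card : ℝ) * (m : ℝ) ^ 3 ≤ O.card * 8 := by exact_mod_cast hcard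
  have hKk : (K : ℝ) ^ 2 ≤ (15 * k / 4) ^ 2 := by
    apply pow_le_pow_left₀ (by positivity); linarith
  have hmk : (k / 4) ^ 3 ≤ (m : ℝ) ^ 3 := pow_le_pow_left₀ (by positivity) hm1 3
  have hQ0 : (0 : ℝ) ≤ Q.card := by positivity
  have hn0 : (0 : ℝ) ≤ H.card := by positivity
  have h1 : (Q.card : ℝ) * (k / 4) ^ 3 ≤ Q.card * (m : ℝ) ^ 3 :=
    mul_le_mul_of_nonneg_left hmk hQ0
  have h2 : 96 * (K : ℝ) ^ 2 * H.card ≤ 96 * (15 * k / 4) ^ 2 * H.card := by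
    apply mul_le_mul_of_nonneg_right _ hn0
    linarith
  have h3 : (Q.card : ℝ) * (k / 4) ^ 3 ≤ 96 * (15 * k / 4) ^ 2 * H.card * 8 := by linarith
  rw [le_div_iff₀ hk0]
  have h4 : k ^ 2 * ((Q.card : ℝ) * k) ≤ k ^ 2 * (691200 * H.card) := by
    nlinarith
  have h5 := le_of_mul_le_mul_left h4 (by positivity)
  linarith
end
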